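/- arXiv:1002.3938 — 2 statements merged into one kernel-verified Lean document; each statement's English description precedes it below -/
import Mathlib

section
/- Let n ≥ 1 and k, r ≥ 1 be integers. The polynomial F_{k,r} is Schur-concave on [0,∞)^n: whenever x, y ∈ [0,∞)^n and x majorizes y, one has F_{k,r}(x) ≤ F_{k,r}(y). -/
open Finset MeasureTheory

/-- `F n r k x`: the sum over all n-tuples κ of nonnegative integers with `∑ i, κ i = k`
and `max_i κ i ≤ r` of `∏ i, x i ^ κ i / (κ i)!`. -/
noncomputable def F (n r k : ℕ) (x : Fin n → ℝ) : ℝ :=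
  ∑ κ ∈ Finset.univ.filter (fun κ : Fin n → Fin (r + 1) => ∑ i, (κ i : ℕ) = k),
    ∏ i, x i ^ (κ i : ℕ) / (Nat.factorial (κ i : ℕ))

/-- The sum of the `m` largest entries of `x`, i.e. the largest sum of `m` entries. -/
noncomputable def sMax (n m : ℕ) (x : Fin n → ℝ) : ℝ :=
  sSup {s : ℝ | ∃ A : Finset (Fin n), A.card = m ∧ s = ∑ i ∈ A, x i}

/-- `x` majorizes `y`: equal total sums, and for each `1 ≤ m ≤ n-1` the sum of the
`m` largest entries of `x` is at least that of `y`. -/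
def Majorizes (n : ℕ) (x y : Fin n → ℝ) : Prop :=
  (∑ i, x i = ∑ i, y i) ∧ ∀ m : ℕ, 1 ≤ m → m ≤ n - 1 → sMax n m y ≤ sMax n m x

/- `F n r k x` is the coefficient of `X ^ k` in `∏ i, e_r (x i * X)`, where `e_r` is the degree `r`
Taylor polynomial of `exp`. Up to permuting entries, a vector is turned into one that it majorizes
by finitely many Robin Hood transfers `(a, b) ↦ (a - δ, b + δ)` with `b + δ ≤ a - δ`, so it is
enough that a transfer does not decrease any coefficient of the product of the two affected factors.
Since `d/da e_r (a X) = X e_r (a X) - a ^ r X ^ (r + 1) / r!`, the derivative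
of `e_r ((a - t) X) e_r ((b + t) X)` at `t = 0` is
`X ^ (r + 1) (a ^ r e_r (b X) - b ^ r e_r (a X)) / r!`, a polynomial whose coefficients are
nonnegative for `0 ≤ b ≤ a`. -/

open Polynomial
open scoped Nat

section PolynomialCoefficients

variable {R ι : Type*}

lemma coeff_mul_nonneg [Semiring R] [PartialOrder R] [IsOrderedRing R] {p q : R[X]}
    (hp : ∀ u, 0 ≤ p.coeff u) (hq : ∀ u, 0 ≤ q.coeff u) (m : ℕ) : 0 ≤ (p * q).coeff m := by
  rw [coeff_mul]
  exact sum_nonneg fun _ _ => mul_nonneg (hp _) (hq _)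

lemma coeff_prod_nonneg [CommSemiring R] [PartialOrder R] [IsOrderedRing R] {s : Finset ι}
    {p : ι → R[X]} (hp : ∀ i ∈ s, ∀ u, 0 ≤ (p i).coeff u) : ∀ m, 0 ≤ (∏ i ∈ s, p i).coeff m := by
  refine prod_induction p (fun q => ∀ m, 0 ≤ q.coeff m) (fun _ _ => coeff_mul_nonneg) ?_ hp
  intro m
  rw [coeff_one]
  split_ifs
  exacts [zero_le_one, le_rfl]

lemma coeff_mul_le_coeff_mul_right [Semiring R] [PartialOrder R] [IsOrderedRing R]
    {p q s : R[X]} (hpq : ∀ u, p.coeff u ≤ q.coeff u) (hs : ∀ u, 0 ≤ s.coeff u) (m : ℕ) :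
    (p * s).coeff m ≤ (q * s).coeff m := by
  simp only [coeff_mul]
  exact sum_le_sum fun _ _ => mul_le_mul_of_nonneg_right (hpq _) (hs _)

end PolynomialCoefficients

section CoefficientwiseDerivative

variable {𝕜 : Type*} [NontriviallyNormedField 𝕜]

/-- The family of polynomials `t ↦ p t` is differentiable at `t`, coefficient by coefficient, with
derivative the polynomial `p'`. The differentiation is in the parameter `t`, not in the
indeterminate; working with coefficients avoids choosing a topology on `𝕜[X]`. -/
def HasCoeffDerivAt (p : 𝕜 → 𝕜[X]) (p' : 𝕜[X]) (t : 𝕜) : Prop :=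
  ∀ u, HasDerivAt (fun s => (p s).coeff u) (p'.coeff u) t

namespace HasCoeffDerivAt

variable {p q : 𝕜 → 𝕜[X]} {p' q' : 𝕜[X]} {t : 𝕜}

lemma add (hp : HasCoeffDerivAt p p' t) (hq : HasCoeffDerivAt q q' t) :
    HasCoeffDerivAt (fun s => p s + q s) (p' + q') t := by
  intro u
  simpa only [coeff_add] using (hp u).fun_add (hq u)

lemma mul (hp : HasCoeffDerivAt p p' t) (hq : HasCoeffDerivAt q q' t) :
    HasCoeffDerivAt (fun s => p s * q s) (p' * q t + p t * q') t := by
  intro m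
  simp only [coeff_add, coeff_mul, ← sum_add_distrib]
  exact HasDerivAt.fun_sum fun ij _ => (hp ij.1).fun_mul (hq ij.2)

lemma comp {f : 𝕜 → 𝕜} {c : 𝕜} (hp : HasCoeffDerivAt p p' (f t)) (hf : HasDerivAt f c t) :
    HasCoeffDerivAt (fun s => p (f s)) (C c * p') t := by
  intro u
  rw [coeff_C_mul, mul_comm]
  exact (hp u).comp t hf

end HasCoeffDerivAt

lemma hasCoeffDerivAt_const (p : 𝕜[X]) (t : 𝕜) : HasCoeffDerivAt (fun _ => p) 0 t :=
  fun _ => hasDerivAt_const t _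

lemma hasCoeffDerivAt_C_mul {f : 𝕜 → 𝕜} {c t : 𝕜} (hf : HasDerivAt f c t) (p : 𝕜[X]) :
    HasCoeffDerivAt (fun s => C (f s) * p) (C c * p) t := by
  intro u
  simpa only [coeff_C_mul] using hf.mul_const (p.coeff u)

end CoefficientwiseDerivative

section TruncatedExponential

/-- The degree `r` Taylor polynomial of `exp (a X)`, as a polynomial in `X`: the factor that a
variable with value `a` contributes to the generating polynomial of the `F n r k`. -/
noncomputable def truncExp (r : ℕ) (a : ℝ) : ℝ[X] :=
  ∑ u ∈ range (r + 1), C (a ^ u / (u ! : ℝ)) * X ^ u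

lemma coeff_truncExp (r u : ℕ) (a : ℝ) :
    (truncExp r a).coeff u = if u ≤ r then a ^ u / (u ! : ℝ) else 0 := by
  simp only [truncExp, finsetSum_coeff, coeff_C_mul_X_pow, sum_ite_eq, mem_range,
    Nat.lt_succ_iff]

lemma coeff_truncExp_nonneg (r : ℕ) {a : ℝ} (ha : 0 ≤ a) (u : ℕ) : 0 ≤ (truncExp r a).coeff u := by
  rw [coeff_truncExp]
  split_ifs <;> positivity

lemma truncExp_zero (a : ℝ) : truncExp 0 a = 1 := by
  simp [truncExp]

lemma truncExp_succ (r : ℕ) (a : ℝ) :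
    truncExp (r + 1) a = truncExp r a + C (a ^ (r + 1) / ((r + 1)! : ℝ)) * X ^ (r + 1) :=
  sum_range_succ _ _

lemma hasDerivAt_pow_succ_div_factorial (r : ℕ) (a : ℝ) :
    HasDerivAt (fun t : ℝ => t ^ (r + 1) / ((r + 1)! : ℝ)) (a ^ r / (r ! : ℝ)) a := by
  refine ((hasDerivAt_pow (r + 1) a).div_const ((r + 1)! : ℝ)).congr_deriv ?_
  rw [Nat.factorial_succ, Nat.cast_mul, Nat.add_sub_cancel, mul_div_mul_left _ _ (by positivity)]

lemma hasCoeffDerivAt_truncExp (r : ℕ) (a : ℝ) :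
    HasCoeffDerivAt (truncExp r)
      (X * truncExp r a - C (a ^ r / (r ! : ℝ)) * X ^ (r + 1)) a := by
  induction r with
  | zero =>
    convert hasCoeffDerivAt_const (1 : ℝ[X]) a using 1
    · exact funext truncExp_zero
    · simp [truncExp_zero]
  | succ r ih =>
    have htop := hasCoeffDerivAt_C_mul (hasDerivAt_pow_succ_div_factorial r a) (X ^ (r + 1))
    convert ih.add htop using 1
    · exact funext (truncExp_succ r)
    · rw [truncExp_succ]
      ring

lemma hasCoeffDerivAt_truncExp_mul_truncExp (r : ℕ) (a b t : ℝ) :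
    HasCoeffDerivAt (fun s => truncExp r (a - s) * truncExp r (b + s))
      (X ^ (r + 1) * (C ((a - t) ^ r / (r ! : ℝ)) * truncExp r (b + t) -
        C ((b + t) ^ r / (r ! : ℝ)) * truncExp r (a - t))) t := by
  have hleft := (hasCoeffDerivAt_truncExp r (a - t)).comp ((hasDerivAt_id' t).const_sub a)
  have hright := (hasCoeffDerivAt_truncExp r (b + t)).comp ((hasDerivAt_id' t).const_add b)
  convert hleft.mul hright using 1
  simp only [C_neg, C_1]
  ring

lemma pow_mul_pow_le_pow_mul_pow {R : Type*} [CommSemiring R] [PartialOrder R] [IsOrderedRing R]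
    {a b : R} (hb : 0 ≤ b) (hba : b ≤ a) {u r : ℕ} (hur : u ≤ r) :
    b ^ r * a ^ u ≤ a ^ r * b ^ u := by
  obtain ⟨d, rfl⟩ := Nat.exists_eq_add_of_le hur
  have ha : 0 ≤ a := hb.trans hba
  calc b ^ (u + d) * a ^ u = b ^ d * (a ^ u * b ^ u) := by ring
    _ ≤ a ^ d * (a ^ u * b ^ u) := by gcongr
    _ = a ^ (u + d) * b ^ u := by ring

lemma pow_mul_coeff_truncExp_le (r : ℕ) {a b : ℝ} (hb : 0 ≤ b) (hba : b ≤ a) (u : ℕ) :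
    b ^ r * (truncExp r a).coeff u ≤ a ^ r * (truncExp r b).coeff u := by
  simp only [coeff_truncExp]
  split_ifs with hur
  · simp only [← mul_div_assoc]
    gcongr ?_ / _
    exact pow_mul_pow_le_pow_mul_pow hb hba hur
  · simp only [mul_zero, le_refl]

lemma coeff_truncExp_transfer_deriv_nonneg (r : ℕ) {a b : ℝ} (hb : 0 ≤ b) (hba : b ≤ a) (m : ℕ) :
    0 ≤ (X ^ (r + 1) * (C (a ^ r / (r ! : ℝ)) * truncExp r b -
      C (b ^ r / (r ! : ℝ)) * truncExp r a)).coeff m := by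
  rw [coeff_X_pow_mul']
  split_ifs
  · rw [coeff_sub, coeff_C_mul, coeff_C_mul, sub_nonneg, div_mul_eq_mul_div, div_mul_eq_mul_div]
    gcongr ?_ / _
    exact pow_mul_coeff_truncExp_le r hb hba _
  · rfl

lemma coeff_truncExp_mul_truncExp_le (r : ℕ) {a b δ : ℝ} (hb : 0 ≤ b) (hδ : 0 ≤ δ)
    (h : b + δ ≤ a - δ) (m : ℕ) :
    (truncExp r a * truncExp r b).coeff m ≤
      (truncExp r (a - δ) * truncExp r (b + δ)).coeff m := by
  have hderiv (t : ℝ) := hasCoeffDerivAt_truncExp_mul_truncExp r a b t m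
  have hmono : MonotoneOn
      (fun t => (truncExp r (a - t) * truncExp r (b + t)).coeff m) (Set.Icc 0 δ) := by
    refine monotoneOn_of_hasDerivWithinAt_nonneg (convex_Icc 0 δ)
      (fun t _ => (hderiv t).continuousAt.continuousWithinAt)
      (fun t _ => (hderiv t).hasDerivWithinAt) fun t ht => ?_
    rw [interior_Icc] at ht
    exact coeff_truncExp_transfer_deriv_nonneg r (by linarith [ht.1]) (by linarith [ht.2]) m
  simpa only [sub_zero, add_zero] using
    hmono (Set.left_mem_Icc.2 hδ) (Set.right_mem_Icc.2 hδ) hδ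

end TruncatedExponential

section RobinHoodTransfers

variable {ι α : Type*} [DecidableEq ι] [AddCommGroup α]

/-- The vector obtained from `x` by moving the amount `δ` from entry `i` to entry `j`. -/
def transfer (x : ι → α) (i j : ι) (δ : α) : ι → α :=
  x - Pi.single i δ + Pi.single j δ

section Entries

variable (x : ι → α) {i j : ι} (δ : α)

lemma transfer_apply_left (hij : i ≠ j) : transfer x i j δ i = x i - δ := by
  simp [transfer, hij]

lemma transfer_apply_right (hij : i ≠ j) : transfer x i j δ j = x j + δ := by
  simp [transfer, hij.symm]

lemma transfer_apply_of_ne {l : ι} (hli : l ≠ i) (hlj : l ≠ j) : transfer x i j δ l = x l := by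
  simp [transfer, hli, hlj]

lemma sum_transfer (i j : ι) (s : Finset ι) :
    ∑ l ∈ s, transfer x i j δ l =
      ∑ l ∈ s, x l - (if i ∈ s then δ else 0) + (if j ∈ s then δ else 0) := by
  simp only [transfer, Pi.add_apply, Pi.sub_apply, sum_add_distrib, sum_sub_distrib,
    sum_pi_single']

end Entries

/-- `y` arises from `x` by one transfer from a larger entry to a smaller one that does not reverse
the order of these two entries (a Robin Hood or Pigou–Dalton transfer, also called a T-transform):
the elementary step of majorization. -/
def RobinHood [Preorder α] (x y : ι → α) : Prop :=
  ∃ i j, ∃ δ, i ≠ j ∧ 0 ≤ δ ∧ x j + δ ≤ x i - δ ∧ y = transfer x i j δ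

lemma RobinHood.forall_le [Preorder α] [IsOrderedAddMonoid α] {x y : ι → α} {c : α}
    (h : RobinHood x y) (hx : ∀ l, c ≤ x l) (l : ι) : c ≤ y l := by
  obtain ⟨i, j, δ, hij, hδ, hle, rfl⟩ := h
  have hj : c ≤ x j + δ := le_add_of_le_of_nonneg (hx j) hδ
  rcases eq_or_ne l i with rfl | hli
  · rw [transfer_apply_left x δ hij]
    exact hj.trans hle
  rcases eq_or_ne l j with rfl | hlj
  · rwa [transfer_apply_right x δ hij]
  · rw [transfer_apply_of_ne x δ hli hlj]
    exact hx l

lemma hammingDist_transfer_lt [Fintype ι] [LinearOrder α] {x y : ι → α} {i j : ι} (hij : i ≠ j)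
    (hi : x i ≠ y i) (hj : x j ≠ y j) :
    hammingDist (transfer x i j (min (x i - y i) (y j - x j))) y < hammingDist x y := by
  set δ := min (x i - y i) (y j - x j) with hδ
  refine card_lt_card ((ssubset_iff_of_subset fun l hl => ?_).2 ?_)
  · simp only [mem_filter_univ] at hl ⊢
    rcases eq_or_ne l i with rfl | hli
    · exact hi
    rcases eq_or_ne l j with rfl | hlj
    · exact hj
    · rwa [transfer_apply_of_ne x δ hli hlj] at hl
  · simp only [mem_filter_univ, not_not]
    rcases min_choice (x i - y i) (y j - x j) with hmin | hmin
    · exact ⟨i, hi, by rw [transfer_apply_left x δ hij, hδ, hmin, sub_sub_cancel]⟩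
    · exact ⟨j, hj, by rw [transfer_apply_right x δ hij, hδ, hmin, add_sub_cancel]⟩

end RobinHoodTransfers

section PrefixMajorization

variable {ι α : Type*} [Fintype ι]

/-- The vectors `x` and `y` have equal sums, and every initial segment of `x` has sum at least that
of `y`. For antitone vectors this is majorization, stated without maximizing over index sets. -/
def PrefixMajorizes [Preorder ι] [LocallyFiniteOrderBot ι] [AddCommMonoid α] [Preorder α]
    (x y : ι → α) : Prop :=
  ∑ l, x l = ∑ l, y l ∧ ∀ j, ∑ l ∈ Iic j, y l ≤ ∑ l ∈ Iic j, x l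

namespace PrefixMajorizes

variable [LinearOrder ι] [LocallyFiniteOrderBot ι] [AddCommGroup α] [LinearOrder α]
  [IsOrderedAddMonoid α] {x y : ι → α}

lemma exists_first_deficit (h : PrefixMajorizes x y) (hne : x ≠ y) :
    ∃ j, x j < y j ∧ ∀ l < j, y l ≤ x l := by
  have hdeficit : {l | x l < y l}.Nonempty := by
    by_contra! hempty
    have hle : ∀ l ∈ univ, y l ≤ x l := fun l _ =>
      not_lt.1 (Set.eq_empty_iff_forall_notMem.1 hempty l)
    have heq := (sum_eq_sum_iff_of_le hle).1 h.1.symm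
    exact hne (funext fun l => (heq l (mem_univ l)).symm)
  obtain ⟨j, hj⟩ := (Set.toFinite {l | x l < y l}).exists_minimal hdeficit
  exact ⟨j, hj.prop, fun l hl => not_lt.1 (hj.not_prop_of_lt hl)⟩

lemma exists_surplus_lt (h : PrefixMajorizes x y) {j : ι} (hj : x j < y j) :
    ∃ i < j, y i < x i := by
  by_contra! hle
  refine (h.2 j).not_gt (sum_lt_sum (fun l hl => ?_) ⟨j, mem_Iic.2 le_rfl, hj⟩)
  rcases (mem_Iic.1 hl).lt_or_eq with hlj | rfl
  exacts [hle l hlj, hj.le]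

lemma transfer_left (h : PrefixMajorizes x y) {i j : ι} (hij : i < j)
    (hle : ∀ l < j, y l ≤ x l) {δ : α} (hδ : δ ≤ x i - y i) :
    PrefixMajorizes (transfer x i j δ) y := by
  refine ⟨by simp [sum_transfer, h.1], fun m => ?_⟩
  simp only [sum_transfer, mem_Iic]
  rcases le_or_gt j m with hjm | hmj
  · simpa [hjm, hij.le.trans hjm] using h.2 m
  rcases le_or_gt i m with him | hmi
  · have hsurplus : x i - y i ≤ ∑ l ∈ Iic m, (x l - y l) :=
      single_le_sum (f := fun l => x l - y l)
        (fun l hl => sub_nonneg.2 (hle l ((mem_Iic.1 hl).trans_lt hmj))) (mem_Iic.2 him)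
    rw [sum_sub_distrib] at hsurplus
    simpa [him, hmj.not_ge] using le_sub_comm.1 (hδ.trans hsurplus)
  · simpa [hmi.not_ge, hmj.not_ge] using h.2 m

-- The largest admissible amount is moved, so that one of the two entries reaches its target.
lemma exists_robinHood (h : PrefixMajorizes x y) (hy : Antitone y) (hne : x ≠ y) :
    ∃ z, RobinHood x z ∧ PrefixMajorizes z y ∧ hammingDist z y < hammingDist x y := by
  obtain ⟨j, hj, hle⟩ := h.exists_first_deficit hne
  obtain ⟨i, hij, hi⟩ := h.exists_surplus_lt hj
  set δ := min (x i - y i) (y j - x j)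
  have hδ : 0 ≤ δ := le_min (sub_nonneg.2 hi.le) (sub_nonneg.2 hj.le)
  have hδi : δ ≤ x i - y i := min_le_left _ _
  have hδj : δ ≤ y j - x j := min_le_right _ _
  have horder : x j + δ ≤ x i - δ :=
    calc x j + δ ≤ y j := le_sub_iff_add_le'.1 hδj
      _ ≤ y i := hy hij.le
      _ ≤ x i - δ := le_sub_comm.1 hδi
  exact ⟨transfer x i j δ, ⟨i, j, δ, hij.ne, hδ, horder, rfl⟩, h.transfer_left hij hle hδi,
    hammingDist_transfer_lt hij.ne hi.ne' hj.ne⟩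

theorem reflTransGen_robinHood (h : PrefixMajorizes x y) (hy : Antitone y) :
    Relation.ReflTransGen RobinHood x y := by
  induction hd : hammingDist x y using Nat.strong_induction_on generalizing x with
  | _ d ih =>
    rcases eq_or_ne x y with rfl | hne
    · rfl
    obtain ⟨z, hxz, hzy, hlt⟩ := h.exists_robinHood hy hne
    exact .head hxz (ih _ (hd ▸ hlt) hzy rfl)

end PrefixMajorizes

end PrefixMajorization

section SortedVectors

lemma exists_antitone_comp_perm {n : ℕ} {α : Type*} [LinearOrder α] (x : Fin n → α) :
    ∃ σ : Equiv.Perm (Fin n), Antitone (x ∘ σ) :=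
  ⟨Tuple.sort (OrderDual.toDual ∘ x), Tuple.monotone_sort (OrderDual.toDual ∘ x)⟩

lemma sum_le_sum_Iic_of_antitone {ι α : Type*} [LinearOrder ι] [LocallyFiniteOrderBot ι]
    [AddCommGroup α] [PartialOrder α] [IsOrderedAddMonoid α] {x : ι → α} (hx : Antitone x) {j : ι}
    {A : Finset ι} (hA : #A = #(Iic j)) : ∑ l ∈ A, x l ≤ ∑ l ∈ Iic j, x l := by
  rw [← sum_sdiff_le_sum_sdiff]
  calc ∑ l ∈ A \ Iic j, x l ≤ #(A \ Iic j) • x j :=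
        sum_le_card_nsmul _ _ _ fun l hl => hx (not_le.1 (by simpa using (mem_sdiff.1 hl).2)).le
    _ = #(Iic j \ A) • x j := by rw [card_sdiff_comm hA]
    _ ≤ ∑ l ∈ Iic j \ A, x l :=
        card_nsmul_le_sum _ _ _ fun l hl => hx (mem_Iic.1 (mem_sdiff.1 hl).1)

variable {n : ℕ}

lemma sMax_comp_perm (m : ℕ) (x : Fin n → ℝ) (σ : Equiv.Perm (Fin n)) :
    sMax n m (x ∘ σ) = sMax n m x := by
  unfold sMax
  congr 1
  ext s
  refine σ.finsetCongr.exists_congr fun A => ?_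
  simp

lemma sMax_eq_sum_Iic {x : Fin n → ℝ} (hx : Antitone x) (j : Fin n) :
    sMax n (j + 1) x = ∑ l ∈ Iic j, x l := by
  refine IsGreatest.csSup_eq ⟨⟨Iic j, Fin.card_Iic j, rfl⟩, ?_⟩
  rintro _ ⟨A, hA, rfl⟩
  exact sum_le_sum_Iic_of_antitone hx (hA.trans (Fin.card_Iic j).symm)

lemma Majorizes.comp_perm {x y : Fin n → ℝ} (h : Majorizes n x y) (σ τ : Equiv.Perm (Fin n)) :
    Majorizes n (x ∘ σ) (y ∘ τ) := by
  refine ⟨?_, fun m hm hmn => ?_⟩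
  · simpa only [Function.comp_apply, Equiv.sum_comp σ x, Equiv.sum_comp τ y] using h.1
  · simpa only [sMax_comp_perm] using h.2 m hm hmn

lemma Majorizes.prefixMajorizes {x y : Fin n → ℝ} (h : Majorizes n x y) (hx : Antitone x)
    (hy : Antitone y) : PrefixMajorizes x y := by
  refine ⟨h.1, fun j => ?_⟩
  by_cases hj : (j : ℕ) + 1 ≤ n - 1
  · simpa only [sMax_eq_sum_Iic hx, sMax_eq_sum_Iic hy] using h.2 (j + 1) (Nat.le_add_left 1 j) hj
  · have hIic : Iic j = univ := by
      ext l
      simp only [mem_Iic, mem_univ, iff_true, Fin.le_def]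
      omega
    simp only [hIic, h.1, le_refl]

end SortedVectors

section SchurConcavity

variable (n r k : ℕ)

lemma F_eq_coeff_prod_truncExp (x : Fin n → ℝ) :
    F n r k x = (∏ i, truncExp r (x i)).coeff k := by
  simp only [F, truncExp, sum_range, prod_univ_sum, Fintype.piFinset_univ, finsetSum_coeff,
    prod_mul_distrib, prod_pow_eq_pow_sum, ← map_prod, coeff_C_mul_X_pow, sum_filter, eq_comm]

lemma F_comp_perm (x : Fin n → ℝ) (σ : Equiv.Perm (Fin n)) : F n r k (x ∘ σ) = F n r k x := by
  simp only [F_eq_coeff_prod_truncExp, Function.comp_apply,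
    Equiv.prod_comp σ fun i => truncExp r (x i)]

variable {n} {x y : Fin n → ℝ}

lemma F_le_of_robinHood (hx : ∀ i, 0 ≤ x i) (h : RobinHood x y) : F n r k x ≤ F n r k y := by
  obtain ⟨i, j, δ, hij, hδ, hle, rfl⟩ := h
  have hrest : ∏ l ∈ {i, j}ᶜ, truncExp r (transfer x i j δ l) =
      ∏ l ∈ {i, j}ᶜ, truncExp r (x l) := by
    refine prod_congr rfl fun l hl => ?_
    simp only [mem_compl, mem_insert, mem_singleton, not_or] at hl
    rw [transfer_apply_of_ne x δ hl.1 hl.2]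
  simp only [F_eq_coeff_prod_truncExp, ← prod_mul_prod_compl {i, j}, hrest, prod_pair hij,
    transfer_apply_left x δ hij, transfer_apply_right x δ hij]
  exact coeff_mul_le_coeff_mul_right (coeff_truncExp_mul_truncExp_le r (hx j) hδ hle)
    (coeff_prod_nonneg fun l _ => coeff_truncExp_nonneg r (hx l)) k

lemma F_le_of_reflTransGen_robinHood (hx : ∀ i, 0 ≤ x i)
    (h : Relation.ReflTransGen RobinHood x y) : F n r k x ≤ F n r k y := by
  induction h using Relation.ReflTransGen.head_induction_on with
  | refl => rfl
  | head hstep _ ih => exact (F_le_of_robinHood r k hx hstep).trans (ih (hstep.forall_le hx))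

end SchurConcavity

theorem stmt10 (n k r : ℕ) (hn : 1 ≤ n) (hk : 1 ≤ k) (hr : 1 ≤ r)
    (x y : Fin n → ℝ) (hx : ∀ i, 0 ≤ x i) (hy : ∀ i, 0 ≤ y i)
    (hxy : Majorizes n x y) :
    F n r k x ≤ F n r k y := by
  obtain ⟨σ, hσ⟩ := exists_antitone_comp_perm x
  obtain ⟨τ, hτ⟩ := exists_antitone_comp_perm y
  have hmaj : PrefixMajorizes (x ∘ σ) (y ∘ τ) := (hxy.comp_perm σ τ).prefixMajorizes hσ hτ
  rw [← F_comp_perm n r k x σ, ← F_comp_perm n r k y τ]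
  exact F_le_of_reflTransGen_robinHood r k (fun i => hx (σ i)) (hmaj.reflTransGen_robinHood hτ)
end

section
/- Let n ≥ 1, k ≥ 1, and 1 ≤ r ≤ n be integers, and let x ∈ [0,∞)^n. Then (1/k!)·M_{k,r}(x) = ∑_{j=1}^{r} C(n−j, r−j) · (Ḡ_{k,j+1}(x) − Ḡ_{k,j}(x)), where C(a,b) denotes the binomial coefficient. -/
open Finset MeasureTheory

/-- `G n k r x`: the sum over all n-tuples p of nonnegative integers with `∑ i, p i = k`
and at least `r` nonzero entries, of `∏ i, x i ^ p i / (p i)!`. -/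
noncomputable def G (n k r : ℕ) (x : Fin n → ℝ) : ℝ :=
  ∑ κ ∈ Finset.univ.filter (fun κ : Fin n → Fin (k + 1) =>
      (∑ i, (κ i : ℕ)) = k ∧ r ≤ (Finset.univ.filter fun i => (κ i : ℕ) ≠ 0).card),
    ∏ i, x i ^ (κ i : ℕ) / (Nat.factorial (κ i : ℕ))

/-- `M n k r x = ∑_{1 ≤ i₁ < ⋯ < i_r ≤ n} (x_{i₁} + ⋯ + x_{i_r})^k`. -/
noncomputable def M (n k r : ℕ) (x : Fin n → ℝ) : ℝ :=
  ∑ A ∈ Finset.powersetCard r (Finset.univ : Finset (Fin n)), (∑ i ∈ A, x i) ^ k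

/-- `Ḡ n k r x = (x₁ + ⋯ + x_n)^k / k! − G n k r x`. -/
noncomputable def Gbar (n k r : ℕ) (x : Fin n → ℝ) : ℝ :=
  (∑ i, x i) ^ k / (Nat.factorial k) - G n k r x

/-!
By the multinomial theorem, `(∑ i ∈ A, x i) ^ k / k!` is the sum of the terms
`∏ i, x i ^ p i / (p i)!` over the exponents `p` of total degree `k` whose support lies in `A`.
Summing over all `A` of cardinality `r` counts the term of `p` once for each `A` containing its
support: if the support has `j ≤ r` elements, there are `C(n - j, r - j)` such sets, and if `j > r`
there are none. Grouping the exponents by `j` gives the identity; `j = 0` does not occur, because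
`k ≠ 0`.
-/

section ExactVars

open scoped Nat

variable {ι K : Type*} [Semifield K]

/-- The monomial `x ^ p / p!` in multi-index notation, in the variables `x i` with `i ∈ s`; these
are the terms of the multinomial expansion of `(∑ i ∈ s, x i) ^ k / k!`. -/
def dividedMonomial (s : Finset ι) (x : ι → K) (p : ι → ℕ) : K :=
  ∏ i ∈ s, x i ^ p i / (p i)!

theorem dividedMonomial_eq_of_subset {s A : Finset ι} (hA : A ⊆ s) (x : ι → K) {p : ι → ℕ}
    (hp : ∀ i, p i ≠ 0 → i ∈ A) : dividedMonomial A x p = dividedMonomial s x p :=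
  prod_subset hA fun i _ hi ↦ by simp [not_imp_comm.1 (hp i) hi]

variable [DecidableEq ι]

/-- The sum of the terms of `(∑ i ∈ s, x i) ^ k / k!` containing exactly `j` distinct variables;
in the notation of the paper this is `Ḡ_{k,j+1}(x) - Ḡ_{k,j}(x)`. -/
def exactVarsSum (s : Finset ι) (k j : ℕ) (x : ι → K) : K :=
  ∑ p ∈ s.piAntidiag k with #{i ∈ s | p i ≠ 0} = j, dividedMonomial s x p

theorem filter_piAntidiag_support_subset {μ : Type*} [AddCommMonoid μ] [HasAntidiagonal μ]
    [DecidableEq μ] {s A : Finset ι} (hA : A ⊆ s) (k : μ) :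
    {p ∈ s.piAntidiag k | {i ∈ s | p i ≠ 0} ⊆ A} = A.piAntidiag k := by
  ext p
  have sum_eq (hpA : ∀ i, p i ≠ 0 → i ∈ A) : ∑ i ∈ A, p i = ∑ i ∈ s, p i :=
    sum_subset hA fun i _ hi ↦ not_imp_comm.1 (hpA i) hi
  simp only [mem_filter, mem_piAntidiag]
  constructor
  · rintro ⟨⟨hsum, hs⟩, hsA⟩
    have hpA (i) (hi : p i ≠ 0) : i ∈ A := hsA (mem_filter.2 ⟨hs i hi, hi⟩)
    exact ⟨(sum_eq hpA).trans hsum, hpA⟩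
  · rintro ⟨hsum, hpA⟩
    exact ⟨⟨(sum_eq hpA).symm.trans hsum, fun i hi ↦ hA (hpA i hi)⟩,
      fun i hi ↦ hpA i (mem_filter.1 hi).2⟩

theorem card_filter_powersetCard_subset_eq_ite {s t : Finset ι} (hts : t ⊆ s) (r : ℕ) :
    #{A ∈ s.powersetCard r | t ⊆ A} = if #t ≤ r then (#s - #t).choose (r - #t) else 0 := by
  split_ifs with htr
  · exact card_filter_powersetCard_subset t s r hts htr
  · refine card_eq_zero.2 (filter_eq_empty_iff.2 fun A hA htA ↦ htr ?_)
    exact (mem_powersetCard.1 hA).2 ▸ card_le_card htA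

theorem exactVarsSum_zero_right (s : Finset ι) {k : ℕ} (hk : k ≠ 0) (x : ι → K) :
    exactVarsSum s k 0 x = 0 := by
  refine sum_eq_zero fun p hp ↦ absurd ?_ hk
  obtain ⟨hp, hcard⟩ := mem_filter.1 hp
  have hzero : ∀ i ∈ s, p i = 0 := by simpa [filter_eq_empty_iff] using hcard
  rw [← (mem_piAntidiag.1 hp).1, sum_eq_zero hzero]

variable [CharZero K]

theorem sum_pow_div_factorial (s : Finset ι) (k : ℕ) (x : ι → K) :
    (∑ i ∈ s, x i) ^ k / k ! = ∑ p ∈ s.piAntidiag k, dividedMonomial s x p := by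
  rw [sum_pow_eq_sum_piAntidiag, sum_div]
  refine sum_congr rfl fun p hp ↦ ?_
  have hspec : (∏ i ∈ s, ((p i)! : K)) * Nat.multinomial s p = k ! := by
    rw [← (mem_piAntidiag.1 hp).1]
    exact_mod_cast Nat.multinomial_spec s p
  have hprod : ∏ i ∈ s, ((p i)! : K) ≠ 0 :=
    prod_ne_zero_iff.2 fun i _ ↦ Nat.cast_ne_zero.2 (Nat.factorial_ne_zero _)
  rw [dividedMonomial, prod_div_distrib,
    div_eq_div_iff (Nat.cast_ne_zero.2 (Nat.factorial_ne_zero _)) hprod, ← hspec]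
  ring

theorem sum_pow_div_factorial_of_subset {s A : Finset ι} (hA : A ⊆ s) (k : ℕ) (x : ι → K) :
    (∑ i ∈ A, x i) ^ k / k ! =
      ∑ p ∈ s.piAntidiag k with {i ∈ s | p i ≠ 0} ⊆ A, dividedMonomial s x p := by
  rw [filter_piAntidiag_support_subset hA, sum_pow_div_factorial]
  exact sum_congr rfl fun p hp ↦ dividedMonomial_eq_of_subset hA x (mem_piAntidiag.1 hp).2

theorem sum_powersetCard_pow_div_factorial (s : Finset ι) (k r : ℕ) (x : ι → K) :
    ∑ A ∈ s.powersetCard r, (∑ i ∈ A, x i) ^ k / k ! =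
      ∑ j ∈ range (r + 1), ((#s - j).choose (r - j) : K) * exactVarsSum s k j x := by
  calc
    _ = ∑ A ∈ s.powersetCard r,
          ∑ p ∈ s.piAntidiag k with {i ∈ s | p i ≠ 0} ⊆ A, dividedMonomial s x p :=
        sum_congr rfl fun A hA ↦ sum_pow_div_factorial_of_subset (mem_powersetCard.1 hA).1 k x
    _ = ∑ p ∈ s.piAntidiag k,
          #{A ∈ s.powersetCard r | {i ∈ s | p i ≠ 0} ⊆ A} * dividedMonomial s x p := by
        simp only [sum_filter]
        rw [sum_comm]
        simp only [← sum_filter, sum_const, nsmul_eq_mul]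
    _ = ∑ p ∈ s.piAntidiag k, ∑ j ∈ range (r + 1), if #{i ∈ s | p i ≠ 0} = j then
          ((#s - j).choose (r - j) : K) * dividedMonomial s x p else 0 := by
        refine sum_congr rfl fun p _ ↦ ?_
        rw [card_filter_powersetCard_subset_eq_ite (filter_subset _ s), sum_ite_eq]
        simp only [mem_range, Nat.lt_succ_iff, Nat.cast_ite, Nat.cast_zero, ite_mul, zero_mul]
    _ = ∑ j ∈ range (r + 1), ((#s - j).choose (r - j) : K) * exactVarsSum s k j x := by
        rw [sum_comm]
        simp only [exactVarsSum, mul_sum, sum_filter, mul_ite, mul_zero]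

theorem stmt17_general (s : Finset ι) {k : ℕ} (hk : k ≠ 0) (r : ℕ) (x : ι → K) :
    (∑ A ∈ s.powersetCard r, (∑ i ∈ A, x i) ^ k) / k ! =
      ∑ j ∈ Icc 1 r, ((#s - j).choose (r - j) : K) * exactVarsSum s k j x := by
  rw [sum_div, sum_powersetCard_pow_div_factorial, range_eq_Ico,
    sum_eq_sum_Ico_succ_bot r.add_one_pos, exactVarsSum_zero_right s hk, mul_zero, zero_add,
    zero_add, Ico_add_one_right_eq_Icc]

end ExactVars

theorem sum_pi_fin_eq_sum_piAntidiag {ι R : Type*} [Fintype ι] [DecidableEq ι] [AddCommMonoid R]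
    (k : ℕ) (f : (ι → ℕ) → R) :
    ∑ κ : ι → Fin (k + 1) with ∑ i, (κ i : ℕ) = k, f (fun i ↦ κ i) =
      ∑ p ∈ univ.piAntidiag k, f p := by
  refine sum_bij (fun κ _ i ↦ (κ i : ℕ)) (fun κ hκ ↦ by simpa using hκ)
    (fun κ _ κ' _ h ↦ funext fun i ↦ Fin.ext (congrFun h i)) (fun p hp ↦ ?_) fun κ _ ↦ rfl
  have hsum : ∑ i, p i = k := (mem_piAntidiag.1 hp).1
  have hlt (i) : p i < k + 1 :=
    Nat.lt_succ_of_le (hsum ▸ single_le_sum (fun _ _ ↦ Nat.zero_le _) (mem_univ i))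
  exact ⟨fun i ↦ ⟨p i, hlt i⟩, by simpa using hsum, rfl⟩

theorem G_eq_sum_piAntidiag (n k r : ℕ) (x : Fin n → ℝ) :
    G n k r x =
      ∑ p ∈ univ.piAntidiag k with r ≤ #{i | p i ≠ 0}, dividedMonomial univ x p := by
  rw [sum_filter, ← sum_pi_fin_eq_sum_piAntidiag, ← sum_filter, filter_filter]
  rfl

theorem Gbar_succ_sub_Gbar (n k j : ℕ) (x : Fin n → ℝ) :
    Gbar n k (j + 1) x - Gbar n k j x = exactVarsSum univ k j x := by
  rw [Gbar, Gbar, sub_sub_sub_cancel_left, G_eq_sum_piAntidiag, G_eq_sum_piAntidiag, exactVarsSum,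
    sum_filter, sum_filter, sum_filter, ← sum_sub_distrib]
  refine sum_congr rfl fun p _ ↦ ?_
  split_ifs <;> first | lia | simp

theorem stmt17 (n k r : ℕ) (hn : 1 ≤ n) (hk : 1 ≤ k) (hr : 1 ≤ r) (hrn : r ≤ n)
    (x : Fin n → ℝ) (hx : ∀ i, 0 ≤ x i) :
    M n k r x / (Nat.factorial k)
      = ∑ j ∈ Finset.Icc 1 r,
          (Nat.choose (n - j) (r - j) : ℝ) * (Gbar n k (j + 1) x - Gbar n k j x) := by
  simpa only [M, Gbar_succ_sub_Gbar, card_univ, Fintype.card_fin] using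
    stmt17_general univ (Nat.one_le_iff_ne_zero.1 hk) r x
end
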